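/- Monotonicity in the half space: Let ℝ^n_+ = {x = (x', x_n) ∈ ℝ^n : x_n > 0}. Let f : ℝ → ℝ be nonincreasing, and let u ∈ L_{2s} ∩ C^{1,1}_loc(ℝ^n_+) be continuous on the closure of ℝ^n_+, bounded, and satisfy (-Δ)^s u(x) = f(u(x)) for all x ∈ ℝ^n_+, u(x) > 0 for all x ∈ ℝ^n_+, and u(x) = 0 for all x ∈ ℝ^n \ ℝ^n_+. Then u is strictly monotone increasing in the x_n-direction: for every x = (x', x_n) ∈ ℝ^n_+ and every τ > 0, u(x', x_n + τ) > u(x', x_n). -/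

import Mathlib

open MeasureTheory Filter Metric Set

noncomputable section

/-- Points of ℝⁿ with the Euclidean norm. -/
abbrev Pt (n : ℕ) := EuclideanSpace ℝ (Fin n)

/-- The space `L_{2s}`: locally integrable functions `u` with
`∫ |u(x)|/(1+|x|^{n+2s}) dx < ∞`. -/
def MemL2s (n : ℕ) (s : ℝ) (u : Pt n → ℝ) : Prop :=
  LocallyIntegrable u volume ∧
    Integrable (fun x : Pt n => |u x| / (1 + ‖x‖ ^ ((n : ℝ) + 2 * s))) volume

/-- `u` is locally `C^{1,1}` on the open set `D`. -/
def C11loc (n : ℕ) (u : Pt n → ℝ) (D : Set (Pt n)) : Prop :=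
  ∀ x ∈ D, ∃ ε > 0, ball x ε ⊆ D ∧ DifferentiableOn ℝ u (ball x ε) ∧
    ∃ K : NNReal, LipschitzOnWith K (fun y => fderivWithin ℝ u (ball x ε) y) (ball x ε)

/-- `(-Δ)^s u (x) = L`, with the principal value defined as the limit, as `ε → 0⁺`, of
`C_{n,s} ∫_{ℝⁿ \ B_ε(x)} (u(x) - u(y))/|x-y|^{n+2s} dy`. -/
def HasFracLap (n : ℕ) (s Cns : ℝ) (u : Pt n → ℝ) (x : Pt n) (L : ℝ) : Prop :=
  Tendsto (fun ε : ℝ =>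
      Cns * ∫ y in {y : Pt n | ε ≤ dist x y}, (u x - u y) / dist x y ^ ((n : ℝ) + 2 * s))
    (nhdsWithin 0 (Set.Ioi 0)) (nhds L)

/-- The index of the last coordinate (`x_n`). -/
def lastIdx (n : ℕ) (hn : 0 < n) : Fin n := ⟨n - 1, Nat.sub_lt hn Nat.one_pos⟩

/-- The unit vector `e_n` in the `x_n` direction. -/
def eN (n : ℕ) (hn : 0 < n) : Pt n := EuclideanSpace.single (lastIdx n hn) 1

/-- the kernel weight -/
def kk (n : ℕ) (s : ℝ) (z : Pt n) : ℝ := min 1 (‖z‖ ^ 2) / ‖z‖ ^ ((n : ℝ) + 2 * s)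

lemma kk_nonneg (n : ℕ) (s : ℝ) (z : Pt n) : 0 ≤ kk n s z := by
  unfold kk; positivity

lemma kk_neg (n : ℕ) (s : ℝ) (z : Pt n) : kk n s (-z) = kk n s z := by
  unfold kk; rw [norm_neg]

lemma kk_pos (n : ℕ) (s : ℝ) (z : Pt n) (hz : z ≠ 0) : 0 < kk n s z := by
  have : 0 < ‖z‖ := norm_pos_iff.2 hz
  unfold kk; positivity

lemma kk_integrable (n : ℕ) (hn : 0 < n) (s : ℝ) (hs : s ∈ Set.Ioo (0 : ℝ) 1) :
    Integrable (kk n s) volume := by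
  haveI : Nonempty (Fin n) := ⟨⟨0, hn⟩⟩
  obtain ⟨h0, h1⟩ := hs
  have := (integrable_fun_norm_addHaar (E := Pt n) volume
    (f := fun t : ℝ => min 1 (t ^ 2) / t ^ ((n : ℝ) + 2 * s))).2 ?_
  · exact this
  have hdim : Module.finrank ℝ (Pt n) = n := by simp
  rw [hdim]
  rw [← Ioc_union_Ioi_eq_Ioi (zero_le_one (α := ℝ))]
  have hpow : ∀ t : ℝ, 0 < t → (t ^ (n - 1) : ℝ) = t ^ ((n : ℝ) - 1) := by
    intro t ht
    rw [← Real.rpow_natCast, Nat.cast_sub hn]; simp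
  apply IntegrableOn.union
  · have h : IntegrableOn (fun t : ℝ => t ^ (1 - 2 * s)) (Ioc 0 1) := by
      rw [← intervalIntegrable_iff_integrableOn_Ioc_of_le zero_le_one]
      exact intervalIntegral.intervalIntegrable_rpow' (by linarith)
    refine h.congr_fun (fun t ht => ?_) measurableSet_Ioc
    have ht0 : 0 < t := ht.1
    have h2 : min 1 (t ^ 2) = t ^ 2 := min_eq_right (pow_le_one₀ ht0.le ht.2)
    simp only [smul_eq_mul, h2]
    rw [hpow t ht0, ← Real.rpow_natCast t 2, ← Real.rpow_sub ht0, ← Real.rpow_add ht0]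
    congr 1; push_cast; ring
  · have h : IntegrableOn (fun t : ℝ => t ^ (-1 - 2 * s)) (Ioi 1) :=
      integrableOn_Ioi_rpow_of_lt (by linarith) one_pos
    refine h.congr_fun (fun t ht => ?_) measurableSet_Ioi
    have ht1 : 1 < t := ht
    have ht0 : 0 < t := by linarith
    have h2 : min 1 (t ^ 2) = 1 := min_eq_left (one_le_pow₀ ht1.le)
    simp only [smul_eq_mul, h2]
    rw [hpow t ht0, one_div, ← Real.rpow_neg ht0.le, ← Real.rpow_add ht0]
    congr 1; ring

lemma meas_ge (n : ℕ) (x : Pt n) (ε : ℝ) : MeasurableSet {y : Pt n | ε ≤ dist x y} :=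
  (isClosed_le continuous_const (continuous_const.dist continuous_id)).measurableSet

lemma trunc_integrable (n : ℕ) (hn : 0 < n) (s : ℝ) (hs : s ∈ Set.Ioo (0 : ℝ) 1)
    (v : Pt n → ℝ) (hv : Continuous v) (M : ℝ) (hM : ∀ x, |v x| ≤ M) (δ : ℝ) (hδ : 0 < δ) :
    IntegrableOn (fun y => (v 0 - v y) / dist 0 y ^ ((n : ℝ) + 2 * s))
      {y : Pt n | δ ≤ dist 0 y} volume := by
  have hk := ((kk_integrable n hn s hs).const_mul (2 * M / min 1 (δ ^ 2))).integrableOn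
    (s := {y : Pt n | δ ≤ dist 0 y})
  refine Integrable.mono' hk ?_ ?_
  · apply Measurable.aestronglyMeasurable
    have := hv.measurable
    fun_prop
  · refine (ae_restrict_iff' (meas_ge n 0 δ)).2 (Eventually.of_forall fun y hy => ?_)
    have hy' : δ ≤ ‖y‖ := by simpa using hy
    have hy0 : 0 < ‖y‖ := by linarith
    have hp : 0 < ‖y‖ ^ ((n : ℝ) + 2 * s) := by positivity
    rw [dist_zero_left, Real.norm_eq_abs, abs_div, abs_of_pos hp]
    unfold kk
    rw [← mul_div_assoc]
    apply div_le_div_of_nonneg_right _ hp.le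
    have hm : 0 < min 1 (δ ^ 2) := by positivity
    have hle : min 1 (δ ^ 2) ≤ min 1 (‖y‖ ^ 2) := by gcongr
    have hM0 : 0 ≤ M := (abs_nonneg _).trans (hM 0)
    have h1 : |v 0 - v y| ≤ 2 * M := by
      have := abs_sub (v 0) (v y)
      linarith [hM 0, hM y]
    calc |v 0 - v y| ≤ 2 * M := h1
      _ = 2 * M / min 1 (δ ^ 2) * min 1 (δ ^ 2) := by field_simp
      _ ≤ _ := by gcongr

lemma fracLap_scale (n : ℕ) (s Cns : ℝ) (u : Pt n → ℝ) (x : Pt n) (L r : ℝ) (hr : 0 < r)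
    (h : HasFracLap n s Cns u x L) :
    HasFracLap n s Cns (fun z => u (x + r • z)) 0 (r ^ (2 * s) * L) := by
  unfold HasFracLap at *
  have ht : Tendsto (fun ε : ℝ => r * ε) (nhdsWithin 0 (Set.Ioi 0)) (nhdsWithin 0 (Set.Ioi 0)) := by
    refine tendsto_nhdsWithin_of_tendsto_nhds_of_eventually_within _ ?_ ?_
    · have : Tendsto (fun ε : ℝ => r * ε) (nhds 0) (nhds (r * 0)) :=
        (continuous_const.mul continuous_id).tendsto 0
      rw [mul_zero] at this
      exact this.mono_left nhdsWithin_le_nhds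
    · filter_upwards [self_mem_nhdsWithin] with ε hε
      exact mul_pos hr hε
  refine ((h.comp ht).const_mul (r ^ (2 * s))).congr (fun ε => ?_)
  simp only [Function.comp]
  set p := (n : ℝ) + 2 * s with hp
  rw [← integral_indicator (meas_ge n x _), ← integral_indicator (meas_ge n 0 _)]
  set I := indicator {y : Pt n | r * ε ≤ dist x y} (fun y => (u x - u y) / dist x y ^ p) with hI
  have h1 : ∫ z, I (x + r • z) = (r ^ n)⁻¹ * ∫ y, I y := by
    rw [Measure.integral_comp_smul volume (fun z => I (x + z)) r, integral_add_left_eq_self I x]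
    simp [abs_of_pos hr]
  have h2 : ∀ z, indicator {y : Pt n | ε ≤ dist 0 y}
      (fun y => (u (x + r • (0 : Pt n)) - u (x + r • y)) / dist 0 y ^ p) z
      = r ^ p * I (x + r • z) := by
    intro z
    have hd : dist x (x + r • z) = r * ‖z‖ := by
      rw [dist_self_add_right, norm_smul, Real.norm_of_nonneg hr.le]
    rw [hI]
    unfold indicator
    simp only [mem_setOf_eq, hd, dist_zero_left, mul_le_mul_iff_right₀ hr, smul_zero, add_zero]
    split_ifs
    · rw [Real.mul_rpow hr.le (norm_nonneg _)]
      have : 0 < r ^ p := by positivity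
      field_simp
    · simp
  simp_rw [h2]
  rw [integral_const_mul, h1, hp, Real.rpow_add hr, Real.rpow_natCast]
  have : r ^ n ≠ 0 := by positivity
  field_simp

lemma fracLap_sub (n : ℕ) (hn : 0 < n) (s : ℝ) (hs : s ∈ Set.Ioo (0 : ℝ) 1) (Cns : ℝ)
    (v w : Pt n → ℝ) (hv : Continuous v) (hw : Continuous w)
    (M : ℝ) (hvM : ∀ x, |v x| ≤ M) (hwM : ∀ x, |w x| ≤ M) (L L' : ℝ)
    (h : HasFracLap n s Cns v 0 L) (h' : HasFracLap n s Cns w 0 L') :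
    HasFracLap n s Cns (fun z => v z - w z) 0 (L - L') := by
  unfold HasFracLap at *
  refine (h.sub h').congr' ?_
  filter_upwards [self_mem_nhdsWithin] with δ hδ
  rw [← mul_sub, ← integral_sub (trunc_integrable n hn s hs v hv M hvM δ hδ)
    (trunc_integrable n hn s hs w hw M hwM δ hδ)]
  congr 2
  ext y
  ring

lemma core (n : ℕ) (hn : 0 < n) (s : ℝ) (hs : s ∈ Set.Ioo (0 : ℝ) 1) (Cns : ℝ) (hC : 0 < Cns)
    (v : Pt n → ℝ) (hv : Continuous v) (M : ℝ) (hM : ∀ x, |v x| ≤ M) (L : ℝ)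
    (h : HasFracLap n s Cns v 0 L) (A : Set (Pt n)) (hA : MeasurableSet A) (ρ : ℝ) (hρ : 0 < ρ)
    (hAρ : ∀ z ∈ A, ρ ≤ ‖z‖) (ε d : ℝ) (hε : 0 ≤ ε)
    (hb : ∀ z, (-2 * ε + A.indicator (fun _ => d) z) * min 1 (‖z‖ ^ 2) ≤ 2 * v 0 - v z - v (-z)) :
    Cns * (-ε * ∫ z, kk n s z) + Cns * (d / 2 * ∫ z in A, kk n s z) ≤ L := by
  unfold HasFracLap at h
  refine ge_of_tendsto h ?_
  filter_upwards [Ioc_mem_nhdsGT hρ] with δ hδ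
  obtain ⟨hδ0, hδρ⟩ := hδ
  rw [← mul_add]
  refine mul_le_mul_of_nonneg_left ?_ hC.le
  rw [← integral_indicator (meas_ge n 0 _)]
  have hint := (integrable_indicator_iff (meas_ge n 0 δ)).2
    (trunc_integrable n hn s hs v hv M hM δ hδ0)
  set F := indicator {y : Pt n | δ ≤ dist 0 y}
    (fun y => (v 0 - v y) / dist 0 y ^ ((n : ℝ) + 2 * s)) with hF
  have hk := kk_integrable n hn s hs
  have hsym : ∫ z, F z = ∫ z, (1 / 2) * (F z + F (-z)) := by
    rw [integral_const_mul, integral_add hint hint.comp_neg, integral_neg_eq_self F volume]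
    ring
  rw [hsym, ← integral_indicator hA, ← integral_const_mul, ← integral_const_mul,
    ← integral_add (hk.const_mul _) ((hk.indicator hA).const_mul _)]
  refine integral_mono ((hk.const_mul _).add ((hk.indicator hA).const_mul _))
    ((hint.add hint.comp_neg).const_mul _) (fun z => ?_)
  simp only
  have hkz := kk_nonneg n s z
  by_cases hz : δ ≤ ‖z‖
  · have hz0 : 0 < ‖z‖ := by linarith
    have hp : 0 < ‖z‖ ^ ((n : ℝ) + 2 * s) := by positivity
    have e1 : F z + F (-z) = (2 * v 0 - v z - v (-z)) / ‖z‖ ^ ((n : ℝ) + 2 * s) := by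
      rw [hF]
      simp only [indicator, mem_setOf_eq, dist_zero_left, norm_neg, hz, if_true]
      ring
    have e2 : (-2 * ε + A.indicator (fun _ => d) z) * kk n s z ≤ F z + F (-z) := by
      rw [e1]
      unfold kk
      rw [← mul_div_assoc]
      exact div_le_div_of_nonneg_right (hb z) hp.le
    by_cases hzA : z ∈ A
    · simp only [indicator_of_mem hzA] at e2 ⊢
      nlinarith
    · simp only [indicator_of_notMem hzA] at e2 ⊢
      nlinarith
  · have hzA : z ∉ A := fun hh => hz (hδρ.trans (hAρ z hh))
    have e1 : F z + F (-z) = 0 := by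
      rw [hF]
      simp only [indicator, mem_setOf_eq, dist_zero_left, norm_neg, hz, if_false, add_zero]
    rw [e1, indicator_of_notMem hzA]
    nlinarith [mul_nonneg hε hkz]

lemma kk_set_pos (n : ℕ) (hn : 0 < n) (s : ℝ) (hs : s ∈ Set.Ioo (0 : ℝ) 1)
    (A U : Set (Pt n)) (hA : MeasurableSet A) (h0 : (0 : Pt n) ∉ A) (hU : IsOpen U)
    (hUA : U ⊆ A) (hne : U.Nonempty) : 0 < ∫ z in A, kk n s z := by
  rw [setIntegral_pos_iff_support_of_nonneg_ae (Eventually.of_forall fun z => kk_nonneg n s z)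
    (kk_integrable n hn s hs).integrableOn]
  refine (hU.measure_pos volume hne).trans_le (measure_mono fun z hz => ⟨?_, hUA hz⟩)
  exact (kk_pos n s z (fun h => h0 (h ▸ hUA hz))).ne'

lemma u_cont (n : ℕ) (hn : 0 < n) (u : Pt n → ℝ)
    (hucont : ContinuousOn u (closure {x : Pt n | 0 < x (lastIdx n hn)}))
    (hzero : ∀ x : Pt n, ¬ 0 < x (lastIdx n hn) → u x = 0) : Continuous u := by
  have hc : Continuous (fun x : Pt n => x (lastIdx n hn)) := by fun_prop
  have hcl : IsClosed {x : Pt n | x (lastIdx n hn) ≤ 0} := isClosed_le hc continuous_const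
  rw [← continuousOn_univ]
  have h2 : ContinuousOn u {x : Pt n | x (lastIdx n hn) ≤ 0} :=
    continuousOn_const.congr (fun x hx => hzero x (not_lt.2 hx))
  refine (hucont.union_of_isClosed h2 isClosed_closure hcl).mono (fun x _ => ?_)
  rcases lt_or_ge 0 (x (lastIdx n hn)) with h | h
  · exact Or.inl (subset_closure h)
  · exact Or.inr h

lemma eN_last (n : ℕ) (hn : 0 < n) (x : Pt n) (τ : ℝ) :
    (x + τ • eN n hn) (lastIdx n hn) = x (lastIdx n hn) + τ := by
  simp [eN]

lemma w_fracLap (n : ℕ) (hn : 0 < n) (s : ℝ) (hs : s ∈ Set.Ioo (0 : ℝ) 1) (Cns : ℝ)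
    (f : ℝ → ℝ) (u : Pt n → ℝ) (huc : Continuous u) (M : ℝ) (hM : ∀ x, |u x| ≤ M)
    (heq : ∀ x : Pt n, 0 < x (lastIdx n hn) → HasFracLap n s Cns u x (f (u x)))
    (τ : ℝ) (hτ : 0 < τ) (x : Pt n) (hx : 0 < x (lastIdx n hn)) (r : ℝ) (hr : 0 < r) :
    HasFracLap n s Cns (fun z => u (x + r • z) - u (x + τ • eN n hn + r • z)) 0
      (r ^ (2 * s) * f (u x) - r ^ (2 * s) * f (u (x + τ • eN n hn))) := by
  refine fracLap_sub n hn s hs Cns _ _ (by fun_prop) (by fun_prop) M (fun z => hM _)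
    (fun z => hM _) _ _ (fracLap_scale n s Cns u x _ r hr (heq x hx))
    (fracLap_scale n s Cns u _ _ r hr (heq _ ?_))
  rw [eN_last]; linarith

lemma w_nonpos (n : ℕ) (hn : 0 < n) (s : ℝ) (hs : s ∈ Set.Ioo (0 : ℝ) 1) (Cns : ℝ)
    (hCns : 0 < Cns)
    (f : ℝ → ℝ) (hf : Antitone f) (u : Pt n → ℝ) (huc : Continuous u)
    (M : ℝ) (hM : ∀ x, |u x| ≤ M)
    (heq : ∀ x : Pt n, 0 < x (lastIdx n hn) → HasFracLap n s Cns u x (f (u x)))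
    (hnn : ∀ x : Pt n, 0 ≤ u x)
    (hzero : ∀ x : Pt n, ¬ 0 < x (lastIdx n hn) → u x = 0)
    (τ : ℝ) (hτ : 0 < τ) (x : Pt n) : u x ≤ u (x + τ • eN n hn) := by
  by_contra! hlt
  set e := τ • eN n hn with he
  set w : Pt n → ℝ := fun y => u y - u (y + e) with hw
  have hwc : Continuous w := by fun_prop
  have hwM : ∀ y, |w y| ≤ 2 * M := fun y => by
    have := abs_sub (u y) (u (y + e))
    simp only [hw]
    linarith [hM y, hM (y + e)]
  have hwH : ∀ y, 0 < w y → 0 < y (lastIdx n hn) := fun y hy => by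
    by_contra hh
    have h1 := hzero y hh
    have h2 := hnn (y + e)
    simp only [hw] at hy
    linarith
  have hbdd : BddAbove (range w) := ⟨2 * M, by rintro _ ⟨y, rfl⟩; exact (le_abs_self _).trans (hwM y)⟩
  set m := sSup (range w) with hm
  have hle : ∀ y, w y ≤ m := fun y => le_csSup hbdd ⟨y, rfl⟩
  have hm0 : 0 < m := lt_of_lt_of_le (by simp only [hw]; linarith) (hle x)
  set A : Set (Pt n) := {z | z (lastIdx n hn) ≤ -2} with hA
  have hcl : Continuous (fun x : Pt n => x (lastIdx n hn)) := by fun_prop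
  have hAm : MeasurableSet A := (isClosed_le hcl continuous_const).measurableSet
  have hA1 : ∀ z ∈ A, 1 ≤ ‖z‖ := fun z hz => by
    have h1 := PiLp.norm_apply_le z (lastIdx n hn)
    have h2 : z (lastIdx n hn) ≤ -2 := hz
    have h3 := neg_abs_le (z (lastIdx n hn))
    rw [Real.norm_eq_abs] at h1
    linarith
  have hκ : 0 < ∫ z in A, kk n s z := by
    refine kk_set_pos n hn s hs A {z | z (lastIdx n hn) < -2} hAm ?_
      (isOpen_lt hcl continuous_const)
      (fun z (hz : z (lastIdx n hn) < -2) => show z (lastIdx n hn) ≤ -2 from le_of_lt hz) ⟨(-3 : ℝ) • eN n hn, ?_⟩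
    · intro h; have := hA1 0 h; norm_num at this
    · simp [eN]; norm_num
  set κ := ∫ z in A, kk n s z with hκd
  set K := ∫ z, kk n s z with hK
  have hK0 : 0 ≤ K := integral_nonneg (kk_nonneg n s)
  obtain ⟨ε, hε0, hεm, hεK⟩ : ∃ ε > 0, ε ≤ m / 4 ∧ ε * K < m * κ / 4 := by
    refine ⟨min (m / 4) (m * κ / 8 / (K + 1)), by positivity, min_le_left _ _, ?_⟩
    have h1 : min (m / 4) (m * κ / 8 / (K + 1)) * K ≤ m * κ / 8 / (K + 1) * (K + 1) :=
      mul_le_mul (min_le_right _ _) (by linarith) hK0 (by positivity)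
    rw [div_mul_cancel₀ _ (by positivity)] at h1
    have : 0 < m * κ := by positivity
    linarith
  obtain ⟨_, ⟨x0, rfl⟩, hx0⟩ := exists_lt_of_lt_csSup (range_nonempty w) (show m - ε < sSup (range w) by linarith)
  have hr := hwH x0 (by linarith)
  set r := x0 (lastIdx n hn) with hrd
  set φ : Pt n → ℝ := fun y => max (1 - ‖y‖ ^ 2) 0 with hφ
  have hφc : Continuous φ := by fun_prop
  obtain ⟨b, hb1, hb⟩ := (isCompact_closedBall (0 : Pt n) 1).exists_isMaxOn
    ⟨0, by simp⟩ (f := fun y => w (x0 + r • y) + ε * φ y) (by fun_prop)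
  have hb1' : ‖b‖ ≤ 1 := by simpa using hb1
  have hφb : φ b = 1 - ‖b‖ ^ 2 := max_eq_left (by nlinarith [norm_nonneg b])
  have hφ0 : ∀ y, 0 ≤ φ y := fun y => le_max_right _ _
  have h00 : w x0 + ε ≤ w (x0 + r • b) + ε * φ b := by
    have := hb (show (0 : Pt n) ∈ closedBall 0 1 by simp)
    simpa [hφ] using this
  have hmax : ∀ y, w (x0 + r • y) + ε * φ y ≤ w (x0 + r • b) + ε * φ b := by
    intro y
    by_cases hy : ‖y‖ ≤ 1
    · exact hb (show y ∈ closedBall 0 1 by simpa using hy)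
    · have : φ y = 0 := max_eq_right (by nlinarith)
      rw [this]
      linarith [hle (x0 + r • y)]
  set xb := x0 + r • b with hxb
  have hwb : 3 * m / 4 ≤ w xb := by
    have : φ b ≤ 1 := by rw [hφb]; nlinarith [norm_nonneg b]
    nlinarith
  have hxbH := hwH xb (by linarith)
  have hL := w_fracLap n hn s hs Cns f u huc M hM heq τ hτ xb hxbH r hr
  have hveq : (fun z => u (xb + r • z) - u (xb + τ • eN n hn + r • z)) = fun z => w (xb + r • z) := by
    ext z
    simp only [hw, he]
    congr 2
    abel
  rw [hveq] at hL
  have hd : ∀ z, w (xb + r • z) + ε * φ (b + z) ≤ w xb + ε * φ b := fun z => by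
    have := hmax (b + z)
    rwa [smul_add, ← add_assoc] at this
  have hd1 : ∀ z, -ε ≤ w xb - w (xb + r • z) := fun z => by
    have h1 := hd z
    have h2 := mul_nonneg hε0.le (hφ0 (b + z))
    have h3 : φ b ≤ 1 := by rw [hφb]; nlinarith [norm_nonneg b]
    nlinarith
  have hd2 : ∀ z, -ε * (‖z‖ ^ 2 + 2 * inner ℝ b z) ≤ w xb - w (xb + r • z) := fun z => by
    have h1 := hd z
    have h2 : 1 - ‖b + z‖ ^ 2 ≤ φ (b + z) := le_max_left _ _
    have h3 := mul_le_mul_of_nonneg_left h2 hε0.le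
    rw [norm_add_sq_real] at h3
    rw [hφb] at h1
    linarith
  have hfin := core n hn s hs Cns hCns (fun z => w (xb + r • z)) (by fun_prop) (2 * M)
    (fun z => hwM _) _ hL A hAm 1 one_pos hA1 ε (m / 2) hε0.le ?_
  · have hff : f (u xb) ≤ f (u (xb + e)) := hf (by
      have : 0 < w xb := by linarith
      simp only [hw] at this
      linarith)
    have h1 := mul_le_mul_of_nonneg_left hff (Real.rpow_nonneg hr.le (2 * s))
    have h2 : 0 < Cns * (-ε * K + m / 2 / 2 * κ) := mul_pos hCns (by linarith)
    rw [← hK, ← hκd] at hfin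
    linarith
  · intro z
    simp only [smul_zero, add_zero]
    have a1 := hd1 z
    have a2 := hd1 (-z)
    by_cases hz : z ∈ A
    · rw [indicator_of_mem hz, min_eq_left (one_le_pow₀ (hA1 z hz))]
      have : w (xb + r • z) ≤ 0 := by
        by_contra! hh
        have h1 := hwH _ hh
        have h2 : z (lastIdx n hn) ≤ -2 := hz
        have h3 := PiLp.norm_apply_le b (lastIdx n hn)
        rw [Real.norm_eq_abs] at h3
        have h4 := le_abs_self (b (lastIdx n hn))
        simp only [hxb, PiLp.add_apply, PiLp.smul_apply, smul_eq_mul, ← hrd] at h1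
        nlinarith
      linarith
    · rw [indicator_of_notMem hz]
      rcases min_choice 1 (‖z‖ ^ 2) with h | h <;> rw [h]
      · linarith
      · have b1 := hd2 z
        have b2 := hd2 (-z)
        rw [norm_neg, inner_neg_right] at b2
        linarith

/-- Monotonicity in the half space. -/
theorem monotonicity_half_space
    (n : ℕ) (hn : 0 < n) (s : ℝ) (hs : s ∈ Set.Ioo (0 : ℝ) 1) (Cns : ℝ) (hCns : 0 < Cns)
    (f : ℝ → ℝ) (hf : Antitone f)
    (u : Pt n → ℝ) (huL : MemL2s n s u)
    (huC : C11loc n u {x : Pt n | 0 < x (lastIdx n hn)})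
    (hucont : ContinuousOn u (closure {x : Pt n | 0 < x (lastIdx n hn)}))
    (hubdd : ∃ M : ℝ, ∀ x : Pt n, |u x| ≤ M)
    (heq : ∀ x : Pt n, 0 < x (lastIdx n hn) → HasFracLap n s Cns u x (f (u x)))
    (hpos : ∀ x : Pt n, 0 < x (lastIdx n hn) → 0 < u x)
    (hzero : ∀ x : Pt n, ¬ 0 < x (lastIdx n hn) → u x = 0) :
    ∀ x : Pt n, 0 < x (lastIdx n hn) → ∀ τ : ℝ, 0 < τ →
      u x < u (x + τ • eN n hn) := by
  intro x hx τ hτ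
  obtain ⟨M, hM⟩ := hubdd
  have huc := u_cont n hn u hucont hzero
  have hnn : ∀ x : Pt n, 0 ≤ u x := fun y => by
    by_cases hy : 0 < y (lastIdx n hn)
    · exact (hpos y hy).le
    · exact (hzero y hy).ge
  have hmono := w_nonpos n hn s hs Cns hCns f hf u huc M hM heq hnn hzero τ hτ
  refine lt_of_le_of_ne (hmono x) (fun hE => ?_)
  have hL := w_fracLap n hn s hs Cns f u huc M hM heq τ hτ x hx 1 one_pos
  rw [← hE, sub_self] at hL
  set v : Pt n → ℝ := fun z => u (x + (1 : ℝ) • z) - u (x + τ • eN n hn + (1 : ℝ) • z) with hv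
  have hvc : Continuous v := by fun_prop
  have hv0 : v 0 = 0 := by simp [hv, ← hE]
  have hvn : ∀ z, v z ≤ 0 := fun z => by
    have := hmono (x + (1 : ℝ) • z)
    simp only [hv]
    rw [add_right_comm] at this
    linarith
  set z0 : Pt n := (-(x (lastIdx n hn))) • eN n hn with hz0
  have hvz0 : v z0 < 0 := by
    have h1 : u (x + (1 : ℝ) • z0) = 0 := hzero _ (by rw [one_smul, hz0, eN_last]; simp)
    have h2 : 0 < u (x + τ • eN n hn + (1 : ℝ) • z0) :=
      hpos _ (by rw [one_smul, hz0, eN_last, eN_last]; linarith)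
    simp only [hv]
    linarith
  set c := -v z0 / 2 with hc
  have hc0 : 0 < c := by linarith
  obtain ⟨ρ, hρ, hρv⟩ := Metric.eventually_nhds_iff.1
    (hvc.continuousAt.eventually (lt_mem_nhds (show -c < v 0 by linarith)))
  have hAm : MeasurableSet {z | v z ≤ -c} := (isClosed_le hvc continuous_const).measurableSet
  have hκ : 0 < ∫ z in {z | v z ≤ -c}, kk n s z := by
    refine kk_set_pos n hn s hs _ {z | v z < -c} hAm ?_ (isOpen_lt hvc continuous_const)
      (fun z (hz : v z < -c) => show v z ≤ -c from le_of_lt hz) ⟨z0, ?_⟩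
    · simp only [mem_setOf_eq, hv0]; linarith
    · simp only [mem_setOf_eq]; linarith
  have hfin := core n hn s hs Cns hCns v hvc (2 * M) (fun z => ?_) _ hL _ hAm ρ hρ ?_ 0 c le_rfl ?_
  · have : 0 < Cns * (c / 2 * ∫ z in {z | v z ≤ -c}, kk n s z) := by positivity
    simp only [neg_zero, zero_mul, mul_zero, zero_add] at hfin
    linarith
  · have := abs_sub (u (x + (1 : ℝ) • z)) (u (x + τ • eN n hn + (1 : ℝ) • z))
    simp only [hv]
    linarith [hM (x + (1 : ℝ) • z), hM (x + τ • eN n hn + (1 : ℝ) • z)]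
  · intro z hz
    by_contra! hh
    have := hρv (show dist z 0 < ρ by simpa using hh)
    have h2 : v z ≤ -c := hz
    linarith
  · intro z
    rw [hv0]
    have a1 := hvn z
    have a2 := hvn (-z)
    by_cases hz : z ∈ {z | v z ≤ -c}
    · rw [indicator_of_mem hz]
      have h2 : v z ≤ -c := hz
      have h3 := min_le_left 1 (‖z‖ ^ 2)
      nlinarith
    · rw [indicator_of_notMem hz]
      linarith
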